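/- arXiv:1805.07373 — 2 statements merged into one kernel-verified Lean document; each statement's English description precedes it below -/
import Mathlib

section
/- (Theorem 2) Let a, b be nonzero points of ℝ² and let β > 1. Set k = β/(2(β−1)), c = k·a, r = ‖c‖, and p = ((β−1)/β)·a. Then the origin O = (0,0) is contained in the β-skeleton influence region S_β(a, b) if and only if b lies in the halfspace H_o(p) = { z ∈ ℝ² : ⟨a, z⟩ ≤ ‖a‖²/(2k) } and b does not lie in the open disk of center c and radius r, i.e. ‖b − k·a‖ ≥ k·‖a‖. -/
/-!
Membership of the origin in either disk is an inequality between norms. Squaring and expanding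
it in `‖a‖²`, `‖b‖²` and `⟪a, b⟫`, the terms quadratic in `β` cancel: the disk centred at
`(β/2) x + (1 - β/2) y` contains the origin iff `β ⟪x, y⟫ ≤ (β - 1) ‖y‖²`. For `(x, y) = (b, a)`
this is the halfspace condition, and for `(x, y) = (a, b)` it is the condition that `b` lies outside
the open disk of centre `k a` that has the origin on its boundary circle.
-/

open scoped RealInnerProductSpace

/-- The β-skeleton influence region of two points in the plane. -/
noncomputable def skeletonRegion (β : ℝ) (x y : EuclideanSpace ℝ (Fin 2)) :
    Set (EuclideanSpace ℝ (Fin 2)) :=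
  Metric.closedBall ((β / 2) • x + (1 - β / 2) • y) (β / 2 * ‖x - y‖) ∩
    Metric.closedBall ((1 - β / 2) • x + (β / 2) • y) (β / 2 * ‖x - y‖)

/-- One of the two disks of the influence region contains the origin iff a linear inequality
in `⟪x, y⟫` and `‖y‖²` holds; the other disk is obtained by exchanging `x` and `y`. -/
lemma zero_mem_skeleton_disk_iff {β : ℝ} (hβ : 0 < β) (x y : EuclideanSpace ℝ (Fin 2)) :
    (0 : EuclideanSpace ℝ (Fin 2)) ∈
        Metric.closedBall ((β / 2) • x + (1 - β / 2) • y) (β / 2 * ‖x - y‖) ↔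
      β * ⟪x, y⟫ ≤ (β - 1) * ‖y‖ ^ 2 := by
  rw [Metric.mem_closedBall, dist_zero_left,
    ← sq_le_sq₀ (norm_nonneg _) (by positivity), mul_pow, norm_add_sq_real, norm_sub_sq_real,
    norm_smul, norm_smul, real_inner_smul_left, real_inner_smul_right, mul_pow, mul_pow,
    Real.norm_eq_abs, Real.norm_eq_abs, sq_abs, sq_abs]
  constructor <;> intro h <;> linarith

/-- The exterior of the open disk of centre `k a` through the origin. -/
lemma mul_norm_le_norm_sub_smul_iff {k : ℝ} (hk : 0 ≤ k) (a b : EuclideanSpace ℝ (Fin 2)) :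
    k * ‖a‖ ≤ ‖b - k • a‖ ↔ 2 * k * ⟪a, b⟫ ≤ ‖b‖ ^ 2 := by
  rw [← sq_le_sq₀ (by positivity) (norm_nonneg _), norm_sub_sq_real, norm_smul,
    real_inner_smul_right, Real.norm_eq_abs, mul_pow, mul_pow, sq_abs, real_inner_comm]
  constructor <;> intro h <;> linarith

/-- Theorem 2: with k = β/(2(β−1)), the origin lies in S_β(a,b)
iff b lies in the halfspace {z : ⟨a,z⟩ ≤ ‖a‖²/(2k)} and outside the open disk
of center k·a and radius k‖a‖. -/
theorem origin_mem_skeletonRegion_iff (β : ℝ) (hβ : 1 < β)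
    (a b : EuclideanSpace ℝ (Fin 2)) (ha : a ≠ 0) (hb : b ≠ 0) :
    (0 : EuclideanSpace ℝ (Fin 2)) ∈ skeletonRegion β a b ↔
      (⟪a, b⟫ ≤ ‖a‖ ^ 2 / (2 * (β / (2 * (β - 1)))) ∧
        ‖b - (β / (2 * (β - 1))) • a‖ ≥ (β / (2 * (β - 1))) * ‖a‖) := by
  have hβ0 : 0 < β := by linarith
  have hβ1 : 0 < β - 1 := by linarith
  have hk : 2 * (β / (2 * (β - 1))) = β / (β - 1) := by field_simp
  -- The second disk is the first one with `a` and `b` exchanged.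
  have hsecond := zero_mem_skeleton_disk_iff hβ0 b a
  rw [add_comm, norm_sub_rev, real_inner_comm] at hsecond
  rw [skeletonRegion, Set.mem_inter_iff, zero_mem_skeleton_disk_iff hβ0 a b, hsecond,
    ge_iff_le, mul_norm_le_norm_sub_smul_iff (by positivity), hk, and_comm]
  refine and_congr ?_ ?_
  · rw [le_div_iff₀ (by positivity), mul_div_assoc', div_le_iff₀ hβ1, mul_comm β,
      mul_comm (β - 1)]
  · rw [div_mul_eq_mul_div, div_le_iff₀ hβ1, mul_comm (β - 1)]
end

section
/- Let a, b be nonzero points of ℝ² and let β > 1. The origin O is contained in S_β(a, b) if and only if (β−1)/β ≥ max{ ⟨a,b⟩/‖a‖², ⟨a,b⟩/‖b‖² }. -/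
/-!
Write `s = β / 2`. Since `s • x + (1 - s) • y = y + s • (x - y)`, the quadratic terms in `s` cancel in
`‖s • x + (1 - s) • y‖² ≤ s² ‖x - y‖²`, and what remains is the linear condition
`β ⟪x, y⟫ ≤ (β - 1) ‖y‖²`. Each disk therefore contributes one of the two quotients in the maximum.
-/

open scoped RealInnerProductSpace

/-- The condition that the origin lies in one of the two disks, as a bound on a quotient. The other
disk is obtained by swapping `x` and `y`. -/
lemma zero_mem_disk_iff (β : ℝ) (hβ : 1 < β) (x y : EuclideanSpace ℝ (Fin 2)) (hy : y ≠ 0) :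
    (0 : EuclideanSpace ℝ (Fin 2)) ∈
        Metric.closedBall ((β / 2) • x + (1 - β / 2) • y) (β / 2 * ‖x - y‖) ↔
      ⟪x, y⟫ / ‖y‖ ^ 2 ≤ (β - 1) / β := by
  have hy2 : 0 < ‖y‖ ^ 2 := by positivity
  have hβ0 : 0 < β := by linarith
  have hr : 0 ≤ β / 2 * ‖x - y‖ := by positivity
  have hc : ‖(β / 2) • x + (1 - β / 2) • y‖ ^ 2 =
      (β / 2 * ‖x - y‖) ^ 2 + (β * ⟪x, y⟫ - (β - 1) * ‖y‖ ^ 2) := by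
    rw [mul_pow, norm_add_sq_real, norm_sub_sq_real, norm_smul, norm_smul, mul_pow, mul_pow,
      real_inner_smul_left, real_inner_smul_right, Real.norm_eq_abs, Real.norm_eq_abs, sq_abs,
      sq_abs]
    ring
  rw [Metric.mem_closedBall, dist_zero_left, ← sq_le_sq₀ (norm_nonneg _) hr, hc,
    div_le_div_iff₀ hy2 hβ0]
  constructor <;> intro h <;> linarith

/-- the origin lies in S_β(a,b) iff
(β−1)/β ≥ max{⟨a,b⟩/‖a‖², ⟨a,b⟩/‖b‖²}. -/
theorem origin_mem_skeletonRegion_iff_max (β : ℝ) (hβ : 1 < β)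
    (a b : EuclideanSpace ℝ (Fin 2)) (ha : a ≠ 0) (hb : b ≠ 0) :
    (0 : EuclideanSpace ℝ (Fin 2)) ∈ skeletonRegion β a b ↔
      (β - 1) / β ≥ max (⟪a, b⟫ / ‖a‖ ^ 2) (⟪a, b⟫ / ‖b‖ ^ 2) := by
  have hsecond : (0 : EuclideanSpace ℝ (Fin 2)) ∈
      Metric.closedBall ((1 - β / 2) • a + (β / 2) • b) (β / 2 * ‖a - b‖) ↔
        ⟪a, b⟫ / ‖a‖ ^ 2 ≤ (β - 1) / β := by
    rw [add_comm, norm_sub_rev, real_inner_comm]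
    exact zero_mem_disk_iff β hβ b a ha
  rw [skeletonRegion, Set.mem_inter_iff, zero_mem_disk_iff β hβ a b hb, hsecond, ge_iff_le,
    max_le_iff, and_comm]
end
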